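/- Multi-step preservation: If Γ ⊢ S ⇒ Γ', σ ⊨ Γ, and ⟨S, σ⟩ ↝* ⟨S', σ'⟩ (reflexive-transitive closure of the small-step relation), then there exists a context Γ₁ such that Γ₁ ⊢ S' ⇒ Γ' and σ' ⊨ Γ₁. -/

import Mathlib

inductive Ty : Type
  | int
  | bool
deriving DecidableEq

inductive Expr : Type
  | int (n : ℤ)
  | tt
  | ff
  | var (x : String)
  | plus (e₁ e₂ : Expr)
  | isOp (e₁ e₂ : Expr)

inductive Val : Type
  | int (n : ℤ)
  | bool (b : Bool)

/-- A value has a type: integer values have type `Int`, booleans have type `Bool`. -/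
inductive ValHasTy : Val → Ty → Prop
  | int (n : ℤ) : ValHasTy (.int n) .int
  | bool (b : Bool) : ValHasTy (.bool b) .bool

/-- Typing contexts: finite maps from variables to types. -/
def Ctx : Type := String → Option Ty

/-- Stores: partial maps from variables to values. -/
def Store : Type := String → Option Val

/-- Expression typing `Γ ⊢ e : τ`. -/
inductive HasTy : Ctx → Expr → Ty → Prop
  | int (Γ : Ctx) (n : ℤ) : HasTy Γ (.int n) .int
  | tt (Γ : Ctx) : HasTy Γ .tt .bool
  | ff (Γ : Ctx) : HasTy Γ .ff .bool
  | var (Γ : Ctx) (x : String) (τ : Ty) : Γ x = some τ → HasTy Γ (.var x) τ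
  | plus (Γ : Ctx) (e₁ e₂ : Expr) :
      HasTy Γ e₁ .int → HasTy Γ e₂ .int → HasTy Γ (.plus e₁ e₂) .int
  | rel (Γ : Ctx) (e₁ e₂ : Expr) (τ : Ty) :
      HasTy Γ e₁ τ → HasTy Γ e₂ τ → HasTy Γ (.isOp e₁ e₂) .bool

inductive Stmt : Type
  | skip
  | letBe (x : String) (e : Expr)
  | ifThenElse (e : Expr) (s₁ s₂ : Stmt)
  | print (e : Expr)
  | seq (s₁ s₂ : Stmt)

/-- Statement typing `Γ ⊢ S ⇒ Γ'`. -/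
inductive StmtTy : Ctx → Stmt → Ctx → Prop
  | skip (Γ : Ctx) : StmtTy Γ .skip Γ
  | letBe (Γ : Ctx) (x : String) (e : Expr) (τ : Ty) :
      HasTy Γ e τ → StmtTy Γ (.letBe x e) (fun y => if y = x then some τ else Γ y)
  | ifThenElse (Γ : Ctx) (e : Expr) (s₁ s₂ : Stmt) :
      HasTy Γ e .bool → StmtTy Γ s₁ Γ → StmtTy Γ s₂ Γ →
      StmtTy Γ (.ifThenElse e s₁ s₂) Γ
  | print (Γ : Ctx) (e : Expr) (τ : Ty) : HasTy Γ e τ → StmtTy Γ (.print e) Γ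
  | seq (Γ Γ' Γ'' : Ctx) (s₁ s₂ : Stmt) :
      StmtTy Γ s₁ Γ' → StmtTy Γ' s₂ Γ'' → StmtTy Γ (.seq s₁ s₂) Γ''

/-- Big-step expression evaluation `σ ⊢ e ⇓ v`. -/
inductive Eval : Store → Expr → Val → Prop
  | int (σ : Store) (n : ℤ) : Eval σ (.int n) (.int n)
  | tt (σ : Store) : Eval σ .tt (.bool true)
  | ff (σ : Store) : Eval σ .ff (.bool false)
  | var (σ : Store) (x : String) (v : Val) : σ x = some v → Eval σ (.var x) v
  | plus (σ : Store) (e₁ e₂ : Expr) (n₁ n₂ : ℤ) :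
      Eval σ e₁ (.int n₁) → Eval σ e₂ (.int n₂) →
      Eval σ (.plus e₁ e₂) (.int (n₁ + n₂))
  | isInt (σ : Store) (e₁ e₂ : Expr) (n₁ n₂ : ℤ) :
      Eval σ e₁ (.int n₁) → Eval σ e₂ (.int n₂) →
      Eval σ (.isOp e₁ e₂) (.bool (n₁ == n₂))
  | isBool (σ : Store) (e₁ e₂ : Expr) (b₁ b₂ : Bool) :
      Eval σ e₁ (.bool b₁) → Eval σ e₂ (.bool b₂) →
      Eval σ (.isOp e₁ e₂) (.bool (b₁ == b₂))

/-- Small-step statement semantics `⟨S, σ⟩ ↝ ⟨S', σ'⟩`. -/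
inductive Step : Stmt → Store → Stmt → Store → Prop
  | letBe (σ : Store) (x : String) (e : Expr) (v : Val) :
      Eval σ e v → Step (.letBe x e) σ .skip (fun y => if y = x then some v else σ y)
  | ifTrue (σ : Store) (e : Expr) (s₁ s₂ : Stmt) :
      Eval σ e (.bool true) → Step (.ifThenElse e s₁ s₂) σ s₁ σ
  | ifFalse (σ : Store) (e : Expr) (s₁ s₂ : Stmt) :
      Eval σ e (.bool false) → Step (.ifThenElse e s₁ s₂) σ s₂ σ
  | print (σ : Store) (e : Expr) (v : Val) : Eval σ e v → Step (.print e) σ .skip σ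
  | seqSkip (σ : Store) (s₂ : Stmt) : Step (.seq .skip s₂) σ s₂ σ
  | seqStep (σ σ' : Store) (s₁ s₁' s₂ : Stmt) :
      Step s₁ σ s₁' σ' → Step (.seq s₁ s₂) σ (.seq s₁' s₂) σ'

/-- `σ ⊨ Γ`: the store is well-typed for the context. -/
def StoreTy (σ : Store) (Γ : Ctx) : Prop :=
  ∀ x τ, Γ x = some τ → ∃ v, σ x = some v ∧ ValHasTy v τ

/-- The empty typing context. -/
def emptyCtx : Ctx := fun _ => none

/-- One step of the small-step semantics, as a relation on configurations. -/
def StepConf : Stmt × Store → Stmt × Store → Prop :=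
  fun c c' => Step c.1 c.2 c'.1 c'.2

theorem eval_preservation {Γ : Ctx} {σ : Store} {e : Expr} {τ : Ty} (h : HasTy Γ e τ)
    (hσ : StoreTy σ Γ) {v : Val} (hv : Eval σ e v) : ValHasTy v τ := by
  cases h with
  | int => cases hv; constructor
  | tt => cases hv; constructor
  | ff => cases hv; constructor
  | var x τ hx =>
    cases hv with
    | var _ _ hv =>
      obtain ⟨w, hw, hwt⟩ := hσ _ _ hx
      rw [hv] at hw
      cases hw
      exact hwt
  | plus => cases hv; constructor
  | rel => cases hv <;> constructor

theorem step_preservation {S S' : Stmt} {σ σ' : Store} (hs : Step S σ S' σ') :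
    ∀ {Γ Γ' : Ctx}, StmtTy Γ S Γ' → StoreTy σ Γ →
      ∃ Γ₁ : Ctx, StmtTy Γ₁ S' Γ' ∧ StoreTy σ' Γ₁ := by
  induction hs with
  | letBe σ x e v hv =>
    intro Γ Γ' h hσ
    cases h with
    | letBe _ _ _ τ he =>
      refine ⟨_, StmtTy.skip _, ?_⟩
      intro y τ' hy
      by_cases hyx : y = x
      · simp only [hyx, if_true] at hy ⊢
        cases hy
        exact ⟨v, rfl, eval_preservation he hσ hv⟩
      · simp only [hyx, if_false] at hy ⊢
        exact hσ y τ' hy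
  | ifTrue =>
    intro Γ Γ' h hσ
    cases h with
    | ifThenElse _ _ _ _ _ h₁ h₂ => exact ⟨_, h₁, hσ⟩
  | ifFalse =>
    intro Γ Γ' h hσ
    cases h with
    | ifThenElse _ _ _ _ _ h₁ h₂ => exact ⟨_, h₂, hσ⟩
  | print =>
    intro Γ Γ' h hσ
    cases h
    exact ⟨_, StmtTy.skip _, hσ⟩
  | seqSkip =>
    intro Γ Γ' h hσ
    cases h with
    | seq _ _ _ _ _ h₁ h₂ =>
      cases h₁
      exact ⟨_, h₂, hσ⟩
  | seqStep _ _ _ _ _ _ ih =>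
    intro Γ Γ' h hσ
    cases h with
    | seq _ _ _ _ _ h₁ h₂ =>
      obtain ⟨Γ₁, h₁', hσ'⟩ := ih h₁ hσ
      exact ⟨Γ₁, StmtTy.seq _ _ _ _ _ h₁' h₂, hσ'⟩

/-- **Multi-step preservation**: typing is preserved along any finite sequence
of small steps, with a store that remains well-typed for some intermediate
context. -/
theorem multi_step_preservation (Γ Γ' : Ctx) (S : Stmt) (σ : Store)
    (S' : Stmt) (σ' : Store) (hty : StmtTy Γ S Γ') (hσ : StoreTy σ Γ)
    (hsteps : Relation.ReflTransGen StepConf (S, σ) (S', σ')) :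
    ∃ Γ₁ : Ctx, StmtTy Γ₁ S' Γ' ∧ StoreTy σ' Γ₁ := by
  have key : ∀ c : Stmt × Store, Relation.ReflTransGen StepConf (S, σ) c →
      ∃ Γ₁ : Ctx, StmtTy Γ₁ c.1 Γ' ∧ StoreTy c.2 Γ₁ := by
    intro c hc
    induction hc with
    | refl => exact ⟨Γ, hty, hσ⟩
    | tail _ hstep ih =>
      obtain ⟨Γ₁, h₁, h₂⟩ := ih
      exact step_preservation hstep h₁ h₂
  exact key _ hsteps
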